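/- For a pure state |ψ⟩ = Σ_{n≥1} ψ_n |n⟩, the generalized robustness of coherence equals (Σ_{n≥1} |ψ_n|)², finite if and only if the amplitudes are absolutely summable. -/

import Mathlib

noncomputable section
open scoped ENNReal ComplexOrder
open Filter

variable {H : Type} [NormedAddCommGroup H] [InnerProductSpace ℂ H] [CompleteSpace H]

local notation "⟪" x ", " y "⟫" => @inner ℂ _ _ x y

/-- Bounded operators on `H`. -/
abbrev Op (H : Type) [NormedAddCommGroup H] [InnerProductSpace ℂ H] : Type := H →L[ℂ] H

/-- The rank-one projector `|ψ⟩⟨ψ|`. -/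
def projv (ψ : H) : Op H := (innerSL ℂ ψ).smulRight ψ

/-- The trace of an operator with respect to a Hilbert basis. -/
def trB {ι : Type} (e : HilbertBasis ι ℂ H) (T : Op H) : ℂ := ∑' n, ⟪e n, T (e n)⟫

/-- A density operator: positive, trace-class (summable diagonal), unit trace. -/
def IsDensity {ι : Type} (e : HilbertBasis ι ℂ H) (ρ : Op H) : Prop :=
  ρ.IsPositive ∧ Summable (fun n => (⟪e n, ρ (e n)⟫).re) ∧ trB e ρ = 1

/-- The trace norm `Tr |T| = Tr √(T†T)`. -/
def traceNorm {ι : Type} (e : HilbertBasis ι ℂ H) (T : Op H) : ℝ :=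
  ∑' n, (⟪e n, (CFC.sqrt (ContinuousLinearMap.adjoint T ∘L T)) (e n)⟫).re

/-- Sequential closure of a set of operators in the trace norm. -/
def tnClosure {ι : Type} (e : HilbertBasis ι ℂ H) (S : Set (Op H)) : Set (Op H) :=
  {T | ∃ u : ℕ → Op H, (∀ k, u k ∈ S) ∧
    Tendsto (fun k => traceNorm e (u k - T)) atTop (nhds 0)}

/-- The generalized robustness `R_F(ρ) = inf {1 + λ | (ρ + λτ)/(1+λ) ∈ F, τ a density operator}`. -/
def Robustness {ι : Type} (e : HilbertBasis ι ℂ H) (F : Set (Op H)) (ρ : Op H) : ℝ≥0∞ :=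
  sInf {r : ℝ≥0∞ | ∃ lam : ℝ, 0 ≤ lam ∧ ∃ τ : Op H, IsDensity e τ ∧
    ((1 + lam)⁻¹ : ℝ) • (ρ + lam • τ) ∈ F ∧ r = ENNReal.ofReal (1 + lam)}

/-- The incoherent states: trace-norm closed convex hull of the basis-state projectors. -/
def IncoherentStates (e : HilbertBasis ℕ ℂ H) : Set (Op H) :=
  tnClosure e (convexHull ℝ {T : Op H | ∃ n : ℕ, T = projv (e n)})

/-!
For states `ρ`, `R_F(ρ)` is the infimum of the `μ` such that `ρ ≤ μ • σ` for some density operator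
`σ ∈ F`. Let `S = ∑ |ψₙ|`. If `S < ∞`, the Cauchy–Schwarz inequality with weights `|ψₙ|` gives
`|ψ⟩⟨ψ| ≤ S² • σ` for the incoherent state `σ = ∑ (|ψₙ| / S) |n⟩⟨n|`. Conversely, if
`|ψ⟩⟨ψ| ≤ μ • σ` with `σ` incoherent, test on a truncated phase vector `x` with
`⟪ψ, x⟫ = ∑_{n < N} |ψₙ|`; the bound `⟪x, σ x⟫ ≤ 1` holds for the basis projectors and passes to
their closed convex hull, so `(∑_{n < N} |ψₙ|)² ≤ μ`.

The delicate point is the closure: `traceNorm` is a `tsum`, which is `0` when `|T|` has no summable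
diagonal, so trace-norm convergence implies convergence in operator norm only once `|A - B|` is
known to have one for positive trace-class `A` and `B`.
-/

section CStarAlgebra

variable {A : Type*} [CStarAlgebra A] [PartialOrder A] [StarOrderedRing A]

-- The sign function is discontinuous, so it is replaced by `t ↦ t / (|t| + ε)`.
lemma exists_norm_abs_sub_mul_self_le {a : A} (ha : IsSelfAdjoint a) {ε : ℝ} (hε : 0 < ε) :
    ∃ s : A, ‖s‖ ≤ 1 ∧ ‖CFC.abs a - s * a‖ ≤ ε := by
  have hpos : ∀ t : ℝ, 0 < |t| + ε := fun t ↦ by positivity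
  have hcont : Continuous fun t : ℝ ↦ t / (|t| + ε) :=
    continuous_id.div (by fun_prop) fun t ↦ (hpos t).ne'
  refine ⟨cfc (fun t : ℝ ↦ t / (|t| + ε)) a, norm_cfc_le zero_le_one fun t _ ↦ ?_, ?_⟩
  · rw [norm_div, Real.norm_eq_abs, Real.norm_of_nonneg (hpos t).le, div_le_one (hpos t)]
    linarith
  · have hcfc : CFC.abs a - cfc (fun t : ℝ ↦ t / (|t| + ε)) a * a =
        cfc (fun t : ℝ ↦ |t| - t / (|t| + ε) * t) a := by
      rw [cfc_sub (fun t : ℝ ↦ |t|) (fun t ↦ t / (|t| + ε) * t) a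
          (hg := (hcont.mul continuous_id).continuousOn),
        cfc_mul (fun t : ℝ ↦ t / (|t| + ε)) (fun t ↦ t) a hcont.continuousOn,
        cfc_id' ℝ a, CFC.abs_eq_cfc_norm a]
      rfl
    have hdiff : ∀ t : ℝ, |t| - t / (|t| + ε) * t = ε * (|t| / (|t| + ε)) := fun t ↦ by
      have := (hpos t).ne'
      field_simp
      linear_combination sq_abs t
    rw [hcfc]
    refine norm_cfc_le hε.le fun t _ ↦ ?_
    rw [hdiff, Real.norm_of_nonneg (by positivity)]
    exact mul_le_of_le_one_right hε.le ((div_le_one (hpos t)).2 (by linarith))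

end CStarAlgebra

lemma sum_smul_add_one_sub_sum_smul_mem {κ E : Type*} [AddCommGroup E] [Module ℝ E] {C : Set E}
    (hC : Convex ℝ C) {s : Finset κ} {w : κ → ℝ} {z : κ → E} {y : E} (hw : ∀ i ∈ s, 0 ≤ w i)
    (hsum : ∑ i ∈ s, w i ≤ 1) (hz : ∀ i ∈ s, z i ∈ C) (hy : y ∈ C) :
    ∑ i ∈ s, w i • z i + (1 - ∑ i ∈ s, w i) • y ∈ C := by
  have h := hC.sum_mem (t := s.insertNone) (w := fun i ↦ i.elim (1 - ∑ i ∈ s, w i) w)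
    (z := fun i ↦ i.elim y z)
    (by rintro (_ | i) hi; exacts [sub_nonneg.2 hsum, hw i (Finset.some_mem_insertNone.1 hi)])
    (by simp)
    (by rintro (_ | i) hi; exacts [hy, hz i (Finset.some_mem_insertNone.1 hi)])
  simpa [add_comm] using h

section QuadraticForms

omit [CompleteSpace H]

lemma re_inner_le_of_le {A B : Op H} (h : A ≤ B) (x : H) : (⟪x, A x⟫).re ≤ (⟪x, B x⟫).re := by
  have := ((ContinuousLinearMap.le_def A B).1 h).re_inner_nonneg_right x
  simpa [inner_sub_right] using this

lemma re_inner_smul_apply (c : ℝ) (A : Op H) (x y : H) :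
    (⟪x, (c • A) y⟫).re = c * (⟪x, A y⟫).re := by
  rw [smul_apply, inner_smul_right_eq_smul, Complex.smul_re, smul_eq_mul]

lemma re_inner_projv_apply_self (v x : H) : (⟪x, projv v x⟫).re = ‖⟪v, x⟫‖ ^ 2 := by
  change (⟪x, ⟪v, x⟫ • v⟫).re = _
  rw [inner_smul_right, ← inner_conj_symm x v, Complex.mul_conj, Complex.normSq_eq_norm_sq,
    Complex.ofReal_re]

lemma projv_nonneg (v : H) : 0 ≤ projv v :=
  (ContinuousLinearMap.nonneg_iff_isPositive _).2 (InnerProductSpace.isPositive_rankOne_self v)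

end QuadraticForms

section SquareRoot

variable {A B : Op H}

lemma le_of_re_inner_le (hA : IsSelfAdjoint A) (hB : IsSelfAdjoint B)
    (h : ∀ x, (⟪x, A x⟫).re ≤ (⟪x, B x⟫).re) : A ≤ B := by
  rw [ContinuousLinearMap.le_def, ContinuousLinearMap.isPositive_def']
  refine ⟨hB.sub hA, fun x ↦ ?_⟩
  rw [ContinuousLinearMap.reApplyInnerSelf_apply, inner_re_symm]
  simpa [inner_sub_right] using h x

lemma re_inner_le_of_norm_sub_mul_sub_le {D S : Op H} {ε : ℝ} (h : ‖D - S * (A - B)‖ ≤ ε) (x : H) :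
    (⟪x, D x⟫).re ≤ ‖⟪ContinuousLinearMap.adjoint S x, A x⟫‖ +
      ‖⟪ContinuousLinearMap.adjoint S x, B x⟫‖ + ε * ‖x‖ ^ 2 := by
  have herr : ‖⟪x, (D - S * (A - B)) x⟫‖ ≤ ε * ‖x‖ ^ 2 :=
    calc ‖⟪x, (D - S * (A - B)) x⟫‖ ≤ ‖x‖ * ‖(D - S * (A - B)) x‖ := norm_inner_le_norm _ _
      _ ≤ ‖x‖ * (ε * ‖x‖) := by gcongr; exact ContinuousLinearMap.le_of_opNorm_le _ h x
      _ = ε * ‖x‖ ^ 2 := by ring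
  have hsplit : ⟪x, D x⟫ = ⟪ContinuousLinearMap.adjoint S x, A x⟫ -
      ⟪ContinuousLinearMap.adjoint S x, B x⟫ + ⟪x, (D - S * (A - B)) x⟫ := by
    simp [ContinuousLinearMap.adjoint_inner_left]
  rw [hsplit]
  exact (Complex.re_le_norm _).trans ((norm_add_le _ _).trans (add_le_add (norm_sub_le _ _) herr))

lemma inner_apply_eq_inner_sqrt (hA : 0 ≤ A) (x y : H) :
    ⟪x, A y⟫ = ⟪CFC.sqrt A x, CFC.sqrt A y⟫ := by
  have hadj : ContinuousLinearMap.adjoint (CFC.sqrt A) = CFC.sqrt A :=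
    (CFC.sqrt_nonneg A).isSelfAdjoint.star_eq
  conv_lhs => rw [← CFC.sqrt_mul_sqrt_self A hA]
  rw [← ContinuousLinearMap.adjoint_inner_right, hadj]
  rfl

lemma re_inner_apply_self_eq_sq_norm_sqrt (hA : 0 ≤ A) (x : H) :
    (⟪x, A x⟫).re = ‖CFC.sqrt A x‖ ^ 2 := by
  rw [inner_apply_eq_inner_sqrt hA, inner_self_eq_norm_sq_to_K]
  norm_cast

end SquareRoot

section HilbertBasis

variable {ι : Type*}

section

omit [CompleteSpace H]

lemma hasSum_sq_norm_inner (e : HilbertBasis ι ℂ H) (x : H) :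
    HasSum (fun i ↦ ‖⟪e i, x⟫‖ ^ 2) (‖x‖ ^ 2) := by
  have h := Complex.hasSum_re (e.hasSum_inner_mul_inner x x)
  convert h using 2 with i
  · rw [← inner_conj_symm x (e i), ← Complex.normSq_eq_conj_mul_self, Complex.ofReal_re,
      Complex.normSq_eq_norm_sq]
  · rw [inner_self_eq_norm_sq_to_K]
    norm_cast

lemma inner_tsum_smul_basis (e : HilbertBasis ι ℂ H) {ψ : ι → ℂ}
    (hψ : Summable fun i ↦ ‖ψ i‖ ^ 2) (i : ι) : ⟪e i, ∑' j, ψ j • e j⟫ = ψ i := by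
  have hmem : Memℓp ψ 2 := memℓp_gen (by simpa using hψ)
  rw [(e.hasSum_repr_symm ⟨ψ, hmem⟩).tsum_eq, ← e.repr_apply_apply,
    LinearIsometryEquiv.apply_symm_apply]

end

variable {e : HilbertBasis ι ℂ H} {T : Op H} {t : ℝ}

lemma sum_sq_norm_apply_le {κ : Type*} {v : κ → H} (hv : Orthonormal ℂ v) {f : ι → ℝ}
    (hf : HasSum f t) (hT : ∀ i, ‖ContinuousLinearMap.adjoint T (e i)‖ ^ 2 ≤ f i) (s : Finset κ) :
    ∑ j ∈ s, ‖T (v j)‖ ^ 2 ≤ t := by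
  refine hasSum_le (fun i ↦ ?_) (hasSum_sum fun j _ ↦ hasSum_sq_norm_inner e (T (v j))) hf
  refine le_trans ?_ (hT i)
  simp_rw [← ContinuousLinearMap.adjoint_inner_left, norm_inner_symm _ (v _)]
  exact hv.sum_inner_products_le _

lemma opNorm_le_sqrt_of_hasSum_adjoint
    (hT : HasSum (fun i ↦ ‖ContinuousLinearMap.adjoint T (e i)‖ ^ 2) t) : ‖T‖ ≤ √t := by
  refine T.opNorm_le_bound (Real.sqrt_nonneg t) fun x ↦ ?_
  have hsq : ‖T x‖ ^ 2 ≤ t * ‖x‖ ^ 2 := by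
    refine hasSum_le (fun i ↦ ?_) (hasSum_sq_norm_inner e (T x)) (hT.mul_right _)
    rw [← ContinuousLinearMap.adjoint_inner_left, ← mul_pow]
    gcongr
    exact norm_inner_le_norm _ _
  simpa using Real.le_sqrt_of_sq_le hsq

end HilbertBasis

section Trace

variable {ι : Type} {e : HilbertBasis ι ℂ H} {A B T : Op H} {a b : ℝ}

/-- The real parts of the diagonal entries of `T` in the basis `e` sum to `t`. For positive `T` this
says that `T` is trace class with trace `t`, without the junk values of `trB`. -/
def HasTrace (e : HilbertBasis ι ℂ H) (T : Op H) (t : ℝ) : Prop :=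
  HasSum (fun i ↦ (⟪e i, T (e i)⟫).re) t

omit [CompleteSpace H] in
lemma hasTrace_projv (e : HilbertBasis ι ℂ H) (v : H) : HasTrace e (projv v) (‖v‖ ^ 2) := by
  simpa only [HasTrace, re_inner_projv_apply_self, norm_inner_symm v]
    using hasSum_sq_norm_inner e v

namespace HasTrace

section

omit [CompleteSpace H]

lemma add (hA : HasTrace e A a) (hB : HasTrace e B b) : HasTrace e (A + B) (a + b) := by
  simpa [HasTrace, inner_add_right] using HasSum.add hA hB

lemma sub (hA : HasTrace e A a) (hB : HasTrace e B b) : HasTrace e (A - B) (a - b) := by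
  simpa [HasTrace, inner_sub_right] using HasSum.sub hA hB

lemma const_smul (c : ℝ) (hA : HasTrace e A a) : HasTrace e (c • A) (c * a) := by
  simpa only [HasTrace, re_inner_smul_apply] using HasSum.mul_left c hA

lemma sum {κ : Type*} {s : Finset κ} {A : κ → Op H} {a : κ → ℝ}
    (h : ∀ k ∈ s, HasTrace e (A k) (a k)) : HasTrace e (∑ k ∈ s, A k) (∑ k ∈ s, a k) := by
  simpa [HasTrace, sum_apply, inner_sum] using hasSum_sum h

end

lemma hasSum_sq_norm_sqrt (h : HasTrace e A a) (hA : 0 ≤ A) :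
    HasSum (fun i ↦ ‖CFC.sqrt A (e i)‖ ^ 2) a := by
  simpa only [HasTrace, re_inner_apply_self_eq_sq_norm_sqrt hA] using h

lemma norm_le (h : HasTrace e A a) (hA : 0 ≤ A) : ‖A‖ ≤ a := by
  have hR : IsSelfAdjoint (CFC.sqrt A) := (CFC.sqrt_nonneg A).isSelfAdjoint
  have ha : 0 ≤ a := (h.hasSum_sq_norm_sqrt hA).nonneg fun _ ↦ sq_nonneg _
  have hsqrt : ‖CFC.sqrt A‖ ≤ √a := by
    refine opNorm_le_sqrt_of_hasSum_adjoint (e := e) ?_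
    rw [← ContinuousLinearMap.star_eq_adjoint, hR.star_eq]
    exact h.hasSum_sq_norm_sqrt hA
  calc ‖A‖ = ‖CFC.sqrt A‖ ^ 2 := by rw [← hR.norm_mul_self, CFC.sqrt_mul_sqrt_self A hA]
    _ ≤ √a ^ 2 := by gcongr
    _ = a := Real.sq_sqrt ha

lemma sum_norm_inner_le (h : HasTrace e A a) (hA : 0 ≤ A) (S : Op H) (s : Finset ι) :
    ∑ i ∈ s, ‖⟪S (e i), A (e i)⟫‖ ≤ ‖S‖ * a := by
  set R := CFC.sqrt A
  have hR : HasSum (fun i ↦ ‖R (e i)‖ ^ 2) a := h.hasSum_sq_norm_sqrt hA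
  have ha : 0 ≤ a := hR.nonneg fun _ ↦ sq_nonneg _
  have hRS : ∑ i ∈ s, ‖(R * S) (e i)‖ ^ 2 ≤ ‖S‖ ^ 2 * a := by
    refine sum_sq_norm_apply_le (e := e) e.orthonormal (hR.mul_left _) (fun i ↦ ?_) s
    have hadj : ContinuousLinearMap.adjoint (R * S) = ContinuousLinearMap.adjoint S * R := by
      rw [← ContinuousLinearMap.star_eq_adjoint, star_mul,
        (CFC.sqrt_nonneg A).isSelfAdjoint.star_eq]
      rfl
    rw [hadj, ← mul_pow, ← ContinuousLinearMap.adjoint.norm_map S]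
    gcongr
    exact (ContinuousLinearMap.adjoint S).le_opNorm (R (e i))
  calc ∑ i ∈ s, ‖⟪S (e i), A (e i)⟫‖
      ≤ ∑ i ∈ s, ‖(R * S) (e i)‖ * ‖R (e i)‖ := Finset.sum_le_sum fun i _ ↦ by
        rw [inner_apply_eq_inner_sqrt hA]
        exact norm_inner_le_norm _ _
    _ ≤ √(∑ i ∈ s, ‖(R * S) (e i)‖ ^ 2) * √(∑ i ∈ s, ‖R (e i)‖ ^ 2) :=
        Real.sum_mul_le_sqrt_mul_sqrt _ _ _
    _ ≤ √(‖S‖ ^ 2 * a) * √a := by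
        gcongr
        exact sum_le_hasSum s (fun _ _ ↦ sq_nonneg _) hR
    _ = ‖S‖ * a := by
        rw [Real.sqrt_mul (sq_nonneg _), Real.sqrt_sq (norm_nonneg S), mul_assoc,
          Real.mul_self_sqrt ha]

lemma sum_re_inner_abs_sub_le (hA : HasTrace e A a) (hA₀ : 0 ≤ A) (hB : HasTrace e B b)
    (hB₀ : 0 ≤ B) (s : Finset ι) :
    ∑ i ∈ s, (⟪e i, CFC.abs (A - B) (e i)⟫).re ≤ a + b := by
  have ha : 0 ≤ a := (norm_nonneg A).trans (hA.norm_le hA₀)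
  have hb : 0 ≤ b := (norm_nonneg B).trans (hB.norm_le hB₀)
  have happrox : ∀ ε > 0, ∑ i ∈ s, (⟪e i, CFC.abs (A - B) (e i)⟫).re ≤ a + b + s.card * ε := by
    intro ε hε
    obtain ⟨S, hS, hSε⟩ :=
      exists_norm_abs_sub_mul_self_le (hA₀.isSelfAdjoint.sub hB₀.isSelfAdjoint) hε
    set S' := ContinuousLinearMap.adjoint S
    have hS' : ‖S'‖ ≤ 1 := (ContinuousLinearMap.adjoint.norm_map S).trans_le hS
    have hterm : ∀ i, (⟪e i, CFC.abs (A - B) (e i)⟫).re ≤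
        ‖⟪S' (e i), A (e i)⟫‖ + ‖⟪S' (e i), B (e i)⟫‖ + ε := fun i ↦ by
      simpa [e.orthonormal.1 i] using re_inner_le_of_norm_sub_mul_sub_le hSε (e i)
    calc ∑ i ∈ s, (⟪e i, CFC.abs (A - B) (e i)⟫).re
        ≤ ∑ i ∈ s, ‖⟪S' (e i), A (e i)⟫‖ + ∑ i ∈ s, ‖⟪S' (e i), B (e i)⟫‖ + s.card * ε := by
          simpa [Finset.sum_add_distrib] using Finset.sum_le_sum fun i (_ : i ∈ s) ↦ hterm i
      _ ≤ a + b + s.card * ε := by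
          gcongr
          · exact (hA.sum_norm_inner_le hA₀ S' s).trans (mul_le_of_le_one_left ha hS')
          · exact (hB.sum_norm_inner_le hB₀ S' s).trans (mul_le_of_le_one_left hb hS')
  have hlim : Tendsto (fun ε : ℝ ↦ a + b + s.card * ε) (nhdsWithin 0 (Set.Ioi 0))
      (nhds (a + b)) :=
    (Continuous.tendsto' (by fun_prop) _ _ (by simp)).mono_left nhdsWithin_le_nhds
  exact ge_of_tendsto hlim (eventually_mem_nhdsWithin.mono happrox)

end HasTrace

section TraceNorm

lemma re_inner_abs_nonneg (T : Op H) (x : H) : 0 ≤ (⟪x, CFC.abs T x⟫).re := by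
  rw [re_inner_apply_self_eq_sq_norm_sqrt (CFC.abs_nonneg T)]
  positivity

lemma traceNorm_nonneg (T : Op H) : 0 ≤ traceNorm e T :=
  tsum_nonneg fun _ ↦ re_inner_abs_nonneg T _

lemma traceNorm_sub_le (hA : HasTrace e A a) (hA₀ : 0 ≤ A) (hB : HasTrace e B b) (hB₀ : 0 ≤ B) :
    traceNorm e (A - B) ≤ a + b :=
  Real.tsum_le_of_sum_le (fun _ ↦ re_inner_abs_nonneg _ _) (hA.sum_re_inner_abs_sub_le hA₀ hB hB₀)

lemma norm_sub_le_traceNorm (hA : HasTrace e A a) (hA₀ : 0 ≤ A) (hB : HasTrace e B b)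
    (hB₀ : 0 ≤ B) : ‖A - B‖ ≤ traceNorm e (A - B) := by
  have habs : HasTrace e (CFC.abs (A - B)) (traceNorm e (A - B)) :=
    (summable_of_sum_le (fun _ ↦ re_inner_abs_nonneg _ _)
      (hA.sum_re_inner_abs_sub_le hA₀ hB hB₀)).hasSum
  exact CFC.norm_abs.symm.trans_le (habs.norm_le (CFC.abs_nonneg _))

end TraceNorm

section Density

variable {ρ σ : Op H} {μ : ℝ}

omit [CompleteSpace H] in
lemma isDensity_iff : IsDensity e ρ ↔ 0 ≤ ρ ∧ HasTrace e ρ 1 := by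
  rw [IsDensity, ← ContinuousLinearMap.nonneg_iff_isPositive]
  refine and_congr_right fun hρ ↦ ?_
  have hreal : ∀ i, ⟪e i, ρ (e i)⟫ = ((⟪e i, ρ (e i)⟫).re : ℂ) := fun i ↦
    (RCLike.nonneg_iff_exists_ofReal.1
      (((ContinuousLinearMap.nonneg_iff_isPositive ρ).1 hρ).inner_nonneg_right (e i))).elim
      fun r hr ↦ by simp [← hr.2]
  rw [trB, tsum_congr hreal, ← Complex.ofReal_tsum, Complex.ofReal_eq_one]
  exact ⟨fun ⟨hs, h1⟩ ↦ h1 ▸ hs.hasSum, fun h ↦ ⟨h.summable, h.tsum_eq⟩⟩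

namespace IsDensity

section

omit [CompleteSpace H]

lemma nonneg (hρ : IsDensity e ρ) : 0 ≤ ρ := (isDensity_iff.1 hρ).1

lemma hasTrace (hρ : IsDensity e ρ) : HasTrace e ρ 1 := (isDensity_iff.1 hρ).2

lemma one_le_of_le_smul (hρ : IsDensity e ρ) (hσ : IsDensity e σ) (h : ρ ≤ μ • σ) : 1 ≤ μ := by
  simpa using hasSum_le (fun i ↦ re_inner_le_of_le h (e i)) hρ.hasTrace (hσ.hasTrace.const_smul μ)

end

lemma eq_of_le (hρ : IsDensity e ρ) (hσ : IsDensity e σ) (h : ρ ≤ σ) : ρ = σ := by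
  have hnorm := (hσ.hasTrace.sub hρ.hasTrace).norm_le (sub_nonneg.2 h)
  rw [sub_self, norm_le_zero_iff, sub_eq_zero] at hnorm
  exact hnorm.symm

end IsDensity

omit [CompleteSpace H] in
lemma isDensity_projv (e : HilbertBasis ι ℂ H) {v : H} (hv : ‖v‖ = 1) : IsDensity e (projv v) :=
  isDensity_iff.2 ⟨projv_nonneg v, by simpa [hv] using hasTrace_projv e v⟩

lemma convex_setOf_isDensity (e : HilbertBasis ι ℂ H) : Convex ℝ {ρ : Op H | IsDensity e ρ} := by
  intro ρ (hρ : IsDensity e ρ) σ (hσ : IsDensity e σ) s t hs ht hst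
  refine isDensity_iff.2 ⟨add_nonneg (smul_nonneg hs hρ.nonneg) (smul_nonneg ht hσ.nonneg), ?_⟩
  simpa only [mul_one, hst] using (hρ.hasTrace.const_smul s).add (hσ.hasTrace.const_smul t)

lemma mem_closure_of_mem_tnClosure {S : Set (Op H)} (hS : ∀ ρ ∈ S, IsDensity e ρ)
    (hσ : IsDensity e σ) (h : σ ∈ tnClosure e S) : σ ∈ closure S := by
  obtain ⟨u, huS, hlim⟩ := h
  have hnorm : Tendsto (fun k ↦ ‖u k - σ‖) atTop (nhds 0) :=
    squeeze_zero (fun _ ↦ norm_nonneg _) (fun k ↦ norm_sub_le_traceNorm (hS _ (huS k)).hasTrace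
      (hS _ (huS k)).nonneg hσ.hasTrace hσ.nonneg) hlim
  exact mem_closure_of_tendsto (tendsto_iff_norm_sub_tendsto_zero.2 hnorm) (.of_forall huS)

theorem robustness_eq_sInf_le_smul (hρ : IsDensity e ρ) (F : Set (Op H)) :
    Robustness e F ρ = sInf {r | ∃ μ : ℝ, ∃ σ ∈ F, IsDensity e σ ∧ ρ ≤ μ • σ ∧
      r = ENNReal.ofReal μ} := by
  rw [Robustness]
  congr 1
  ext r
  constructor
  · rintro ⟨lam, hlam, τ, hτ, hF, rfl⟩
    have h1 : (1 + lam) ≠ 0 := by positivity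
    refine ⟨1 + lam, _, hF, ?_, ?_, rfl⟩
    · rw [smul_add, smul_smul]
      exact convex_setOf_isDensity e hρ hτ (by positivity) (by positivity) (by field_simp)
    · rw [smul_inv_smul₀ h1]
      exact le_add_of_nonneg_right (smul_nonneg hlam hτ.nonneg)
  · rintro ⟨μ, σ, hF, hσ, hle, rfl⟩
    obtain rfl | hμ := (hρ.one_le_of_le_smul hσ hle).eq_or_lt
    · obtain rfl := hρ.eq_of_le hσ (by simpa using hle)
      exact ⟨0, le_rfl, ρ, hρ, by simpa using hF, by simp⟩
    · have hμ₀ : μ - 1 ≠ 0 := (sub_pos.2 hμ).ne'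
      refine ⟨μ - 1, (sub_pos.2 hμ).le, (μ - 1)⁻¹ • (μ • σ - ρ), isDensity_iff.2 ⟨?_, ?_⟩, ?_, ?_⟩
      · exact smul_nonneg (by positivity) (sub_nonneg.2 hle)
      · simpa [hμ₀] using
          ((hσ.hasTrace.const_smul μ).sub hρ.hasTrace).const_smul (μ - 1)⁻¹
      · rw [smul_inv_smul₀ hμ₀, add_sub_cancel, add_sub_cancel,
          inv_smul_smul₀ (zero_lt_one.trans hμ).ne']
        exact hF
      · rw [add_sub_cancel]

end Density

end Trace

section DiagonalOperators

/-- The operator that is diagonal in the basis `e` with diagonal `p`, as a norm-convergent series;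
it is `0` by convention if the series does not converge. -/
def diagOp {ι : Type} (e : HilbertBasis ι ℂ H) (p : ι → ℝ) : Op H := ∑' i, p i • projv (e i)

variable {ι : Type} {e : HilbertBasis ι ℂ H} {p : ι → ℝ}

lemma hasSum_diagOp (e : HilbertBasis ι ℂ H) (hp : Summable p) :
    HasSum (fun i ↦ p i • projv (e i)) (diagOp e p) := by
  refine (Summable.of_norm ?_).hasSum
  simpa [projv, norm_smul, e.orthonormal.1 _] using hp.abs

omit [CompleteSpace H] in
lemma diagOp_const_mul (c : ℝ) (p : ι → ℝ) :
    diagOp e (fun i ↦ c * p i) = c • diagOp e p := by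
  simp_rw [diagOp, mul_smul]
  exact tsum_const_smul'' c

lemma diagOp_nonneg (e : HilbertBasis ι ℂ H) (hp : ∀ i, 0 ≤ p i) : 0 ≤ diagOp e p :=
  tsum_nonneg fun i ↦ smul_nonneg (hp i) (projv_nonneg _)

lemma hasSum_re_inner_diagOp (e : HilbertBasis ι ℂ H) (hp : Summable p) (x : H) :
    HasSum (fun i ↦ p i * ‖⟪e i, x⟫‖ ^ 2) (⟪x, diagOp e p x⟫).re := by
  have h := Complex.hasSum_re <|
    ((hasSum_diagOp e hp).mapL (ContinuousLinearMap.apply ℂ H x)).mapL (innerSL ℂ x)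
  simpa only [ContinuousLinearMap.apply_apply, innerSL_apply_apply, re_inner_smul_apply,
    re_inner_projv_apply_self] using h

lemma hasTrace_diagOp (e : HilbertBasis ι ℂ H) (hp : Summable p) :
    HasTrace e (diagOp e p) (∑' i, p i) := by
  have hdiag : ∀ i, (⟪e i, diagOp e p (e i)⟫).re = p i := fun i ↦ by
    classical
    refine (hasSum_re_inner_diagOp e hp (e i)).unique ?_
    convert hasSum_ite_eq i (p i) using 2 with j
    rw [orthonormal_iff_ite.1 e.orthonormal]
    split_ifs with h <;> simp [h]
  simpa only [HasTrace, hdiag] using hp.hasSum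

lemma isDensity_diagOp (e : HilbertBasis ι ℂ H) (hp₀ : ∀ i, 0 ≤ p i) (hp : HasSum p 1) :
    IsDensity e (diagOp e p) :=
  isDensity_iff.2 ⟨diagOp_nonneg e hp₀, hp.tsum_eq ▸ hasTrace_diagOp e hp.summable⟩

lemma traceNorm_sum_add_smul_sub_diagOp_le (hp₀ : ∀ i, 0 ≤ p i) (hp : HasSum p 1)
    (s : Finset ι) {ρ : Op H} (hρ : IsDensity e ρ) :
    traceNorm e (∑ i ∈ s, p i • projv (e i) + (1 - ∑ i ∈ s, p i) • ρ - diagOp e p) ≤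
      2 * (1 - ∑ i ∈ s, p i) := by
  set r := 1 - ∑ i ∈ s, p i
  set σ := ∑ i ∈ s, p i • projv (e i)
  have hr : 0 ≤ r := sub_nonneg.2 (sum_le_hasSum s (fun i _ ↦ hp₀ i) hp)
  have htail : 0 ≤ diagOp e p - σ := sub_nonneg.2 <| sum_le_hasSum s
    (fun i _ ↦ smul_nonneg (hp₀ i) (projv_nonneg _)) (hasSum_diagOp e hp.summable)
  have hσ : HasTrace e σ (∑ i ∈ s, p i) := .sum fun i _ ↦ by
    simpa [e.orthonormal.1 i] using (hasTrace_projv e (e i)).const_smul (p i)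
  have htrace : HasTrace e (diagOp e p - σ) r :=
    (hp.tsum_eq ▸ hasTrace_diagOp e hp.summable).sub hσ
  calc traceNorm e (σ + r • ρ - diagOp e p) = traceNorm e (r • ρ - (diagOp e p - σ)) := by
        congr 1; abel
    _ ≤ r * 1 + r := traceNorm_sub_le (hρ.hasTrace.const_smul r) (smul_nonneg hr hρ.nonneg)
        htrace htail
    _ = 2 * r := by ring

lemma projv_le_smul_diagOp (v : H) (hv : Summable fun i ↦ ‖⟪e i, v⟫‖) :
    projv v ≤ (∑' i, ‖⟪e i, v⟫‖) • diagOp e fun i ↦ ‖⟪e i, v⟫‖ := by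
  have hd : 0 ≤ diagOp e fun i ↦ ‖⟪e i, v⟫‖ := diagOp_nonneg e fun _ ↦ norm_nonneg _
  refine le_of_re_inner_le (projv_nonneg v).isSelfAdjoint
    (smul_nonneg (tsum_nonneg fun _ ↦ norm_nonneg _) hd).isSelfAdjoint fun x ↦ ?_
  rw [re_inner_projv_apply_self, re_inner_smul_apply]
  have hq := hasSum_re_inner_diagOp e hv x
  refine le_of_tendsto ((e.hasSum_inner_mul_inner v x).norm.pow 2) (.of_forall fun s ↦ ?_)
  calc ‖∑ i ∈ s, ⟪v, e i⟫ * ⟪e i, x⟫‖ ^ 2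
      ≤ (∑ i ∈ s, ‖⟪e i, v⟫‖ * ‖⟪e i, x⟫‖) ^ 2 := by
        gcongr
        refine (norm_sum_le _ _).trans_eq (Finset.sum_congr rfl fun i _ ↦ ?_)
        rw [norm_mul, norm_inner_symm]
    _ ≤ (∑ i ∈ s, ‖⟪e i, v⟫‖) * ∑ i ∈ s, ‖⟪e i, v⟫‖ * ‖⟪e i, x⟫‖ ^ 2 :=
        Finset.sum_sq_le_sum_mul_sum_of_sq_le_mul s (fun _ _ ↦ norm_nonneg _)
          (fun _ _ ↦ by positivity) fun _ _ ↦ by rw [mul_pow, sq, mul_assoc]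
    _ ≤ (∑' i, ‖⟪e i, v⟫‖) * (⟪x, diagOp e (fun i ↦ ‖⟪e i, v⟫‖) x⟫).re := by
        gcongr
        · exact hv.sum_le_tsum s fun _ _ ↦ norm_nonneg _
        · exact sum_le_hasSum s (fun _ _ ↦ by positivity) hq

end DiagonalOperators

section Incoherent

variable {e : HilbertBasis ℕ ℂ H} {σ : Op H}

lemma diagOp_mem_incoherentStates {p : ℕ → ℝ} (hp₀ : ∀ n, 0 ≤ p n) (hp : HasSum p 1) :
    diagOp e p ∈ IncoherentStates e := by
  have hlim : Tendsto (fun k ↦ 2 * (1 - ∑ n ∈ Finset.range k, p n)) atTop (nhds 0) := by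
    simpa using (hp.tendsto_sum_nat.const_sub 1).const_mul 2
  refine ⟨fun k ↦ ∑ n ∈ Finset.range k, p n • projv (e n) +
    (1 - ∑ n ∈ Finset.range k, p n) • projv (e 0), fun k ↦ ?_, ?_⟩
  · exact sum_smul_add_one_sub_sum_smul_mem (convex_convexHull ℝ _) (fun n _ ↦ hp₀ n)
      (sum_le_hasSum _ (fun n _ ↦ hp₀ n) hp) (fun n _ ↦ subset_convexHull ℝ _ ⟨n, rfl⟩)
      (subset_convexHull ℝ _ ⟨0, rfl⟩)
  · exact squeeze_zero (fun _ ↦ traceNorm_nonneg _) (fun k ↦ traceNorm_sum_add_smul_sub_diagOp_le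
      hp₀ hp (Finset.range k) (isDensity_projv e (e.orthonormal.1 0))) hlim

lemma re_inner_le_one_of_mem_incoherentStates (hσ : IsDensity e σ) (h : σ ∈ IncoherentStates e)
    {x : H} (hx : ∀ n, ‖⟪e n, x⟫‖ ≤ 1) : (⟪x, σ x⟫).re ≤ 1 := by
  have hclosed : IsClosed {A : Op H | (⟪x, A x⟫).re ≤ 1} :=
    isClosed_le (by fun_prop) continuous_const
  have hconvex : Convex ℝ {A : Op H | (⟪x, A x⟫).re ≤ 1} := by
    intro A (hA : (⟪x, A x⟫).re ≤ 1) B (hB : (⟪x, B x⟫).re ≤ 1) a b ha hb hab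
    rw [Set.mem_ofPred_eq, add_apply, inner_add_right, Complex.add_re, re_inner_smul_apply,
      re_inner_smul_apply]
    nlinarith
  have hdensity : convexHull ℝ {A : Op H | ∃ n, A = projv (e n)} ⊆ {A | IsDensity e A} :=
    convexHull_min (by rintro _ ⟨n, rfl⟩; exact isDensity_projv e (e.orthonormal.1 n))
      (convex_setOf_isDensity e)
  have hbound : convexHull ℝ {A : Op H | ∃ n, A = projv (e n)} ⊆ {A | (⟪x, A x⟫).re ≤ 1} := by
    refine convexHull_min ?_ hconvex
    rintro _ ⟨n, rfl⟩
    rw [Set.mem_ofPred_eq, re_inner_projv_apply_self]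
    exact pow_le_one₀ (norm_nonneg _) (hx n)
  exact closure_minimal hbound hclosed (mem_closure_of_mem_tnClosure hdensity hσ h)

lemma sq_sum_norm_inner_le_of_projv_le_smul (hσ : IsDensity e σ) (h : σ ∈ IncoherentStates e)
    {v : H} {μ : ℝ} (hμ : 0 ≤ μ) (hle : projv v ≤ μ • σ) (s : Finset ℕ) :
    (∑ n ∈ s, ‖⟪e n, v⟫‖) ^ 2 ≤ μ := by
  choose c hc hcv using fun n ↦ RCLike.exists_norm_eq_mul_self ⟪v, e n⟫
  set x := ∑ n ∈ s, c n • e n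
  have hx : ∀ n, ‖⟪e n, x⟫‖ ≤ 1 := fun n ↦ by
    simp only [x, inner_sum, inner_smul_right, orthonormal_iff_ite.1 e.orthonormal, mul_ite,
      mul_one, mul_zero, Finset.sum_ite_eq]
    split_ifs <;> simp [hc]
  have hvx : ⟪v, x⟫ = ((∑ n ∈ s, ‖⟪e n, v⟫‖ : ℝ) : ℂ) := by
    simp only [x, inner_sum, inner_smul_right, ← hcv, norm_inner_symm v, Complex.ofReal_sum]
    rfl
  calc (∑ n ∈ s, ‖⟪e n, v⟫‖) ^ 2 = (⟪x, projv v x⟫).re := by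
        rw [re_inner_projv_apply_self, hvx, Complex.norm_real, Real.norm_eq_abs, sq_abs]
    _ ≤ μ * (⟪x, σ x⟫).re := (re_inner_le_of_le hle x).trans_eq (re_inner_smul_apply μ σ x x)
    _ ≤ μ := mul_le_of_le_one_right hμ (re_inner_le_one_of_mem_incoherentStates hσ h hx)

lemma robustness_projv_le (e : HilbertBasis ℕ ℂ H) {v : H} (hv : ‖v‖ = 1)
    (hsum : Summable fun n ↦ ‖⟪e n, v⟫‖) :
    Robustness e (IncoherentStates e) (projv v) ≤ ENNReal.ofReal ((∑' n, ‖⟪e n, v⟫‖) ^ 2) := by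
  set S := ∑' n, ‖⟪e n, v⟫‖
  have hS : 0 < S := by
    refine (tsum_nonneg fun _ ↦ norm_nonneg _).lt_of_ne' fun hS ↦ ?_
    have hcoeff := (hasSum_zero_iff_of_nonneg fun _ ↦ norm_nonneg _).1 (hS ▸ hsum.hasSum)
    simpa [hv, funext_iff.1 hcoeff] using (hasSum_sq_norm_inner e v).tsum_eq
  have hp₀ : ∀ n, 0 ≤ S⁻¹ * ‖⟪e n, v⟫‖ := fun n ↦ by positivity
  have hp : HasSum (fun n ↦ S⁻¹ * ‖⟪e n, v⟫‖) 1 := by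
    simpa [S, hS.ne'] using hsum.hasSum.mul_left S⁻¹
  rw [robustness_eq_sInf_le_smul (isDensity_projv e hv)]
  refine sInf_le ⟨S ^ 2, diagOp e fun n ↦ S⁻¹ * ‖⟪e n, v⟫‖, diagOp_mem_incoherentStates hp₀ hp,
    isDensity_diagOp e hp₀ hp, (projv_le_smul_diagOp v hsum).trans_eq ?_, rfl⟩
  rw [diagOp_const_mul, smul_smul, sq, mul_assoc, mul_inv_cancel₀ hS.ne', mul_one]

lemma le_robustness_projv (e : HilbertBasis ℕ ℂ H) {v : H} (hv : ‖v‖ = 1) :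
    (∑' n, ENNReal.ofReal ‖⟪e n, v⟫‖) ^ 2 ≤ Robustness e (IncoherentStates e) (projv v) := by
  have hρ := isDensity_projv e hv
  rw [robustness_eq_sInf_le_smul hρ]
  refine le_sInf ?_
  rintro _ ⟨μ, σ, hF, hσ, hle, rfl⟩
  have hμ : 0 ≤ μ := zero_le_one.trans (hρ.one_le_of_le_smul hσ hle)
  have hsqrt : ∑' n, ENNReal.ofReal ‖⟪e n, v⟫‖ ≤ ENNReal.ofReal √μ := by
    rw [ENNReal.tsum_eq_iSup_sum]
    refine iSup_le fun s ↦ ?_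
    rw [← ENNReal.ofReal_sum_of_nonneg fun _ _ ↦ norm_nonneg _]
    exact ENNReal.ofReal_le_ofReal <|
      Real.le_sqrt_of_sq_le (sq_sum_norm_inner_le_of_projv_le_smul hσ hF hμ hle s)
  calc (∑' n, ENNReal.ofReal ‖⟪e n, v⟫‖) ^ 2 ≤ ENNReal.ofReal √μ ^ 2 := by gcongr
    _ = ENNReal.ofReal μ := by rw [← ENNReal.ofReal_pow (Real.sqrt_nonneg μ), Real.sq_sqrt hμ]

theorem robustness_projv (e : HilbertBasis ℕ ℂ H) {v : H} (hv : ‖v‖ = 1) :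
    Robustness e (IncoherentStates e) (projv v) = (∑' n, ENNReal.ofReal ‖⟪e n, v⟫‖) ^ 2 := by
  refine le_antisymm ?_ (le_robustness_projv e hv)
  obtain htop | hfin := eq_or_ne (∑' n, ENNReal.ofReal ‖⟪e n, v⟫‖) ⊤
  · rw [htop, ENNReal.top_pow two_ne_zero]
    exact le_top
  · have hsum : Summable fun n ↦ ‖⟪e n, v⟫‖ := by simpa using ENNReal.summable_toReal hfin
    rw [← ENNReal.ofReal_tsum_of_nonneg (fun _ ↦ norm_nonneg _) hsum,
      ← ENNReal.ofReal_pow (tsum_nonneg fun _ ↦ norm_nonneg _)]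
    exact robustness_projv_le e hv hsum

end Incoherent

/-- for a pure state `|ψ⟩ = ∑ₙ ψₙ |n⟩`, the generalized robustness of coherence
equals `(∑ₙ |ψₙ|)²` (in `ℝ≥0∞`, hence finite iff the amplitudes are absolutely summable). -/
theorem robustness_coherence_pure (e : HilbertBasis ℕ ℂ H)
    (ψ : ℕ → ℂ) (hsq : Summable (fun n => ‖ψ n‖ ^ 2)) (hnorm : ∑' n : ℕ, ‖ψ n‖ ^ 2 = 1) :
    Robustness e (IncoherentStates e) (projv (∑' n : ℕ, ψ n • e n)) =
      (∑' n : ℕ, ENNReal.ofReal ‖ψ n‖) ^ 2 := by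
  have hinner : ∀ n, ⟪e n, ∑' m, ψ m • e m⟫ = ψ n := inner_tsum_smul_basis e hsq
  have hunit : ‖∑' n, ψ n • e n‖ = 1 := by
    have h := (hasSum_sq_norm_inner e (∑' m, ψ m • e m)).tsum_eq
    simp only [hinner, hnorm] at h
    exact (pow_eq_one_iff_of_nonneg (norm_nonneg _) two_ne_zero).1 h.symm
  simpa only [hinner] using robustness_projv e hunit
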